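/- arXiv:2504.05373 — 5 statements merged into one kernel-verified Lean document; each statement's English description precedes it below -/
import Mathlib

section
/- Let m ≥ 2 be an integer and let a, b, c : ℕ → ℤ be three sequences, each nonnegative, convex (2·x(n) ≤ x(n−1) + x(n+1) for all n ≥ 1), and eventually zero, with a(0) = b(0) = c(0) = m. Assume the balance condition 2m ≤ a(1) + b(1) + c(1), and assume a(2) ≥ 1, b(2) ≥ 1 and c(2) ≥ 1. Then m ≥ 3, a(1) ≥ 2, b(1) ≥ 2 and c(1) ≥ 2. -/
/-!
Along a convex sequence the forward differences increase, so a sequence that falls below `x k` at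
some later index must be strictly decreasing up to `k + 1`. A leg with `x 2 ≥ 1` vanishes further
out, hence `x 0 > x 1 > x 2 ≥ 1`; over the integers each strict step costs at least `1`.
-/

open Set
open scoped fwdDiff

theorem monotone_fwdDiff_one_iff {R : Type*} [Ring R] [PartialOrder R] [IsOrderedAddMonoid R]
    {x : ℕ → R} :
    Monotone (Δ_[1] x) ↔ ∀ n : ℕ, 1 ≤ n → 2 * x n ≤ x (n - 1) + x (n + 1) := by
  have step (n : ℕ) :
      Δ_[1] x n ≤ Δ_[1] x (n + 1) ↔ 2 * x (n + 1) ≤ x n + x (n + 1 + 1) := by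
    rw [fwdDiff, fwdDiff, sub_le_sub_iff, two_mul, add_comm (x n)]
  refine ⟨fun hx n hn => ?_, fun hx => monotone_nat_of_le_succ fun n => ?_⟩
  · obtain ⟨n, rfl⟩ := Nat.exists_eq_add_of_le' hn
    exact (step n).1 (hx n.le_succ)
  · exact (step n).2 (hx (n + 1) n.succ_pos)

theorem monotoneOn_Ici_of_monotone_fwdDiff {G : Type*} [AddCommGroup G] [PartialOrder G]
    [IsOrderedAddMonoid G] {x : ℕ → G} (hx : Monotone (Δ_[1] x)) {k : ℕ} (hk : x k ≤ x (k + 1)) :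
    MonotoneOn x (Ici k) :=
  monotoneOn_of_le_add_one ordConnected_Ici fun _ _ hn _ =>
    sub_nonneg.1 ((sub_nonneg.2 hk).trans (hx hn))

theorem strictAntiOn_Iic_of_monotone_fwdDiff {G : Type*} [AddCommGroup G] [LinearOrder G]
    [IsOrderedAddMonoid G] {x : ℕ → G} (hx : Monotone (Δ_[1] x)) {k n : ℕ} (hkn : k ≤ n)
    (h : x n < x k) : StrictAntiOn x (Iic (k + 1)) := by
  have drop : x (k + 1) < x k := by
    by_contra! hk
    exact h.not_ge (monotoneOn_Ici_of_monotone_fwdDiff hx hk self_mem_Ici hkn hkn)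
  exact strictAntiOn_of_add_one_lt ordConnected_Iic fun _ _ _ hi =>
    sub_neg.1 ((hx (Nat.le_of_succ_le_succ hi)).trans_lt (sub_neg.2 drop))

theorem add_sub_le_of_strictAntiOn_Iic {x : ℕ → ℤ} {k : ℕ} (hx : StrictAntiOn x (Iic k)) {i : ℕ}
    (hi : i ≤ k) : x k + (k - i) ≤ x i := by
  induction hi using Nat.decreasingInduction with
  | self => simp
  | of_succ i hi ih =>
    have : x (i + 1) < x i := hx hi.le hi i.lt_succ_self
    push_cast at ih
    linarith

/-- Each arm `3, 2, 1` of the affine `E₆` weight pattern comes from a leg with `k = 2`. -/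
theorem trivalent_E6_step_general {x : ℕ → ℤ}
    (hconv : ∀ n : ℕ, 1 ≤ n → 2 * x n ≤ x (n - 1) + x (n + 1))
    (hzero : ∃ N : ℕ, ∀ n : ℕ, N ≤ n → x n = 0) {k : ℕ} (hk : 0 < x k) {i : ℕ} (hi : i ≤ k) :
    x k + (k - i) ≤ x i := by
  obtain ⟨N, hN⟩ := hzero
  have below : x (max k N) < x k := (hN _ (le_max_right k N)).trans_lt hk
  have anti : StrictAntiOn x (Iic (k + 1)) :=
    strictAntiOn_Iic_of_monotone_fwdDiff (monotone_fwdDiff_one_iff.2 hconv) (le_max_left k N) below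
  exact add_sub_le_of_strictAntiOn_Iic (anti.mono (Iic_subset_Iic.2 k.le_succ)) hi

/-- E6 step: three nonnegative, convex, eventually-zero leg sequences with
common value `m ≥ 2` at the trivalent vertex, satisfying the balance condition
`2m ≤ a 1 + b 1 + c 1` and `a 2, b 2, c 2 ≥ 1`, force `m ≥ 3` and
`a 1, b 1, c 1 ≥ 2`. -/
theorem trivalent_E6_step (m : ℤ) (hm : 2 ≤ m) (a b c : ℕ → ℤ)
    (hannonneg : ∀ n : ℕ, 0 ≤ a n)
    (hbnonneg : ∀ n : ℕ, 0 ≤ b n)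
    (hcnonneg : ∀ n : ℕ, 0 ≤ c n)
    (haconv : ∀ n : ℕ, 1 ≤ n → 2 * a n ≤ a (n - 1) + a (n + 1))
    (hbconv : ∀ n : ℕ, 1 ≤ n → 2 * b n ≤ b (n - 1) + b (n + 1))
    (hcconv : ∀ n : ℕ, 1 ≤ n → 2 * c n ≤ c (n - 1) + c (n + 1))
    (hazero : ∃ N : ℕ, ∀ n : ℕ, N ≤ n → a n = 0)
    (hbzero : ∃ N : ℕ, ∀ n : ℕ, N ≤ n → b n = 0)
    (hczero : ∃ N : ℕ, ∀ n : ℕ, N ≤ n → c n = 0)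
    (ha0 : a 0 = m) (hb0 : b 0 = m) (hc0 : c 0 = m)
    (hbal : 2 * m ≤ a 1 + b 1 + c 1)
    (ha2 : 1 ≤ a 2) (hb2 : 1 ≤ b 2) (hc2 : 1 ≤ c 2) :
    3 ≤ m ∧ 2 ≤ a 1 ∧ 2 ≤ b 1 ∧ 2 ≤ c 1 := by
  have hm3 := trivalent_E6_step_general haconv hazero ha2 zero_le_two
  have ha1 := trivalent_E6_step_general haconv hazero ha2 one_le_two
  have hb1 := trivalent_E6_step_general hbconv hbzero hb2 one_le_two
  have hc1 := trivalent_E6_step_general hcconv hczero hc2 one_le_two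
  omega
end

section
/- Let m ≥ 2 be an integer and let a, b, c : ℕ → ℤ be three sequences, each nonnegative, convex (2·x(n) ≤ x(n−1) + x(n+1) for all n ≥ 1), and eventually zero, with a(0) = b(0) = c(0) = m. Assume the balance condition 2m ≤ a(1) + b(1) + c(1), and assume a(3) ≥ 1 and b(3) ≥ 1. Then m ≥ 4, a(1) ≥ 3, a(2) ≥ 2, b(1) ≥ 3, b(2) ≥ 2 and c(1) ≥ 2. -/
/-!
The successive differences of a convex sequence are nondecreasing, so once the sequence fails to
decrease strictly it never decreases again. A leg which is positive at `3` and vanishes later must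
therefore be strictly decreasing down to index `3`, and integrality forces its first four weights to
be at least `4, 3, 2, 1`. Both long legs satisfy `a 1, b 1 ≤ m - 1`, so the balance condition leaves
at least `2` for `c 1`.
-/

theorem monotone_fwdDiff_of_two_mul_le {R : Type*} [NonAssocRing R] [PartialOrder R]
    [IsOrderedAddMonoid R] {x : ℕ → R}
    (hconv : ∀ n : ℕ, 1 ≤ n → 2 * x n ≤ x (n - 1) + x (n + 1)) :
    Monotone (fwdDiff 1 x) := by
  refine monotone_nat_of_le_succ fun n ↦ ?_
  rw [fwdDiff, fwdDiff, sub_le_sub_iff, ← two_mul, add_comm _ (x n)]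
  exact hconv (n + 1) n.succ_pos

section OrderedGroup

variable {G : Type*} [AddCommGroup G] [LinearOrder G] [IsOrderedAddMonoid G] {x : ℕ → G}

theorem monotoneOn_Ici_of_monotone_fwdDiff_of_le_succ (hx : Monotone (fwdDiff 1 x)) {k : ℕ}
    (hk : x k ≤ x (k + 1)) : MonotoneOn x (Set.Ici k) :=
  monotoneOn_nat_Ici_of_le_succ fun _ hkn ↦
    sub_nonneg.mp ((sub_nonneg.mpr hk).trans (hx hkn))

theorem succ_lt_of_monotone_fwdDiff (hx : Monotone (fwdDiff 1 x)) {n : ℕ}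
    (hdrop : ∃ N : ℕ, n ≤ N ∧ x N < x n) {k : ℕ} (hkn : k ≤ n) : x (k + 1) < x k := by
  obtain ⟨N, hnN, hlt⟩ := hdrop
  by_contra! hk
  have hmono : MonotoneOn x (Set.Ici k) := monotoneOn_Ici_of_monotone_fwdDiff_of_le_succ hx hk
  exact hlt.not_ge (hmono hkn (hkn.trans hnN) hnN)

end OrderedGroup

theorem exists_ge_lt_of_eventually_zero {α : Type*} [Zero α] [Preorder α] {x : ℕ → α}
    (hzero : ∃ N : ℕ, ∀ n : ℕ, N ≤ n → x n = 0) {k : ℕ} (hk : 0 < x k) :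
    ∃ N : ℕ, k ≤ N ∧ x N < x k := by
  obtain ⟨N, hN⟩ := hzero
  exact ⟨max k N, le_max_left k N, (hN _ (le_max_right k N)).trans_lt hk⟩

theorem trivalent_E7_step_general {m c₁ : ℤ} {a b : ℕ → ℤ}
    (haconv : ∀ n : ℕ, 1 ≤ n → 2 * a n ≤ a (n - 1) + a (n + 1))
    (hbconv : ∀ n : ℕ, 1 ≤ n → 2 * b n ≤ b (n - 1) + b (n + 1))
    (hadrop : ∃ N : ℕ, 3 ≤ N ∧ a N < a 3) (hbdrop : ∃ N : ℕ, 3 ≤ N ∧ b N < b 3)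
    (ha0 : a 0 = m) (hb0 : b 0 = m) (hbal : 2 * m ≤ a 1 + b 1 + c₁)
    (ha3 : 1 ≤ a 3) (hb3 : 1 ≤ b 3) :
    4 ≤ m ∧ 3 ≤ a 1 ∧ 2 ≤ a 2 ∧ 3 ≤ b 1 ∧ 2 ≤ b 2 ∧ 2 ≤ c₁ := by
  have ha (k : ℕ) (hk : k ≤ 3) : a (k + 1) < a k :=
    succ_lt_of_monotone_fwdDiff (monotone_fwdDiff_of_two_mul_le haconv) hadrop hk
  have hb (k : ℕ) (hk : k ≤ 3) : b (k + 1) < b k :=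
    succ_lt_of_monotone_fwdDiff (monotone_fwdDiff_of_two_mul_le hbconv) hbdrop hk
  have ha10 : a 1 < a 0 := ha 0 (by norm_num)
  have ha21 : a 2 < a 1 := ha 1 (by norm_num)
  have ha32 : a 3 < a 2 := ha 2 (by norm_num)
  have hb10 : b 1 < b 0 := hb 0 (by norm_num)
  have hb21 : b 2 < b 1 := hb 1 (by norm_num)
  have hb32 : b 3 < b 2 := hb 2 (by norm_num)
  omega

/-- E7 step: three nonnegative, convex, eventually-zero leg sequences with
common value `m ≥ 2` at the trivalent vertex, satisfying the balance condition
`2m ≤ a 1 + b 1 + c 1` and `a 3, b 3 ≥ 1`, force `m ≥ 4`, `a 1, b 1 ≥ 3`,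
`a 2, b 2 ≥ 2` and `c 1 ≥ 2`. -/
theorem trivalent_E7_step (m : ℤ) (hm : 2 ≤ m) (a b c : ℕ → ℤ)
    (hannonneg : ∀ n : ℕ, 0 ≤ a n)
    (hbnonneg : ∀ n : ℕ, 0 ≤ b n)
    (hcnonneg : ∀ n : ℕ, 0 ≤ c n)
    (haconv : ∀ n : ℕ, 1 ≤ n → 2 * a n ≤ a (n - 1) + a (n + 1))
    (hbconv : ∀ n : ℕ, 1 ≤ n → 2 * b n ≤ b (n - 1) + b (n + 1))
    (hcconv : ∀ n : ℕ, 1 ≤ n → 2 * c n ≤ c (n - 1) + c (n + 1))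
    (hazero : ∃ N : ℕ, ∀ n : ℕ, N ≤ n → a n = 0)
    (hbzero : ∃ N : ℕ, ∀ n : ℕ, N ≤ n → b n = 0)
    (hczero : ∃ N : ℕ, ∀ n : ℕ, N ≤ n → c n = 0)
    (ha0 : a 0 = m) (hb0 : b 0 = m) (hc0 : c 0 = m)
    (hbal : 2 * m ≤ a 1 + b 1 + c 1)
    (ha3 : 1 ≤ a 3) (hb3 : 1 ≤ b 3) :
    4 ≤ m ∧ 3 ≤ a 1 ∧ 2 ≤ a 2 ∧ 3 ≤ b 1 ∧ 2 ≤ b 2 ∧ 2 ≤ c 1 :=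
  trivalent_E7_step_general haconv hbconv (exists_ge_lt_of_eventually_zero hazero ha3)
    (exists_ge_lt_of_eventually_zero hbzero hb3) ha0 hb0 hbal ha3 hb3
end

section
/- Let m ≥ 2 be an integer and let a, b, c : ℕ → ℤ be three sequences, each nonnegative, convex (2·x(n) ≤ x(n−1) + x(n+1) for all n ≥ 1), and eventually zero, with a(0) = b(0) = c(0) = m. Assume the balance condition 2m ≤ a(1) + b(1) + c(1), and assume c(2) = 0 and b(3) = 0. Then m ≥ 6; a(k) ≥ 6 − k for every 0 ≤ k ≤ 6; b(1) ≥ 4 and b(2) ≥ 2; and c(1) ≥ 3. -/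
/-!
A convex sequence lies above the line through its first two terms, so a leg that starts at weight
`m` and reaches `0` after `n` steps drops by at least `m / n` in its first step. The balance
condition bounds the sum of the three first drops by `m`; the legs `b` and `c` use up `m / 3` and
`m / 2`, so the first drop `d` of `a` satisfies `6 * d ≤ m`. Feeding this back into the same
inequalities shows that the weights dominate `d` times the affine `E₈` weights. Since `a` goes
below `m` at some point, convexity forces `d > 0`, hence `d ≥ 1` by integrality.
-/

section ConvexSeq

variable {G : Type*} [AddCommGroup G]

/-- Discrete convexity of a sequence, the condition imposed on the weights along each leg. It is
stated with `2 • x n` so as to make sense in any ordered abelian group. -/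
def ConvexSeq [LE G] (x : ℕ → G) : Prop :=
  ∀ n, 1 ≤ n → 2 • x n ≤ x (n - 1) + x (n + 1)

theorem convexSeq_iff_two_mul {R : Type*} [NonAssocRing R] [LE R] {x : ℕ → R} :
    ConvexSeq x ↔ ∀ n, 1 ≤ n → 2 * x n ≤ x (n - 1) + x (n + 1) := by
  simp only [ConvexSeq, two_nsmul, two_mul]

variable {x : ℕ → G}

theorem ConvexSeq.antitone_sub_succ [PartialOrder G] [IsOrderedAddMonoid G] (hx : ConvexSeq x) :
    Antitone fun n ↦ x n - x (n + 1) := by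
  refine antitone_nat_of_succ_le fun n ↦ ?_
  have hconv : x (n + 1) + x (n + 1) ≤ x n + x (n + 2) := by
    simpa only [two_nsmul, Nat.add_sub_cancel] using hx (n + 1) n.succ_pos
  rwa [sub_le_sub_iff]

theorem ConvexSeq.sub_le_nsmul_sub [PartialOrder G] [IsOrderedAddMonoid G] (hx : ConvexSeq x)
    (n : ℕ) : x 0 - x n ≤ n • (x 0 - x 1) :=
  calc
    x 0 - x n = ∑ i ∈ Finset.range n, (x i - x (i + 1)) := (Finset.sum_range_sub' x n).symm
    _ ≤ (Finset.range n).card • (x 0 - x 1) :=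
      Finset.sum_le_card_nsmul _ _ _ fun i _ ↦ hx.antitone_sub_succ i.zero_le
    _ = n • (x 0 - x 1) := by rw [Finset.card_range]

theorem ConvexSeq.apply_one_lt_apply_zero [LinearOrder G] [IsOrderedAddMonoid G]
    (hx : ConvexSeq x) {n : ℕ} (hn : x n < x 0) : x 1 < x 0 := by
  have hpos : 0 < n • (x 0 - x 1) := (sub_pos.2 hn).trans_le (hx.sub_le_nsmul_sub n)
  exact sub_pos.1 (lt_of_not_ge fun hle ↦ hpos.not_ge (nsmul_nonpos hle n))

end ConvexSeq

section Trivalent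

variable {R : Type*} [CommRing R] [LinearOrder R] [IsStrictOrderedRing R] {m : R} {a b c : ℕ → R}

theorem affineE8_mul_sub_le (ha : ConvexSeq a) (hb : ConvexSeq b) (hc : ConvexSeq c)
    (ha0 : a 0 = m) (hb0 : b 0 = m) (hc0 : c 0 = m) (hbal : 2 * m ≤ a 1 + b 1 + c 1)
    (hc2 : c 2 ≤ 0) (hb3 : b 3 ≤ 0) :
    (∀ k : ℕ, (6 - k) * (m - a 1) ≤ a k) ∧
      4 * (m - a 1) ≤ b 1 ∧ 2 * (m - a 1) ≤ b 2 ∧ 3 * (m - a 1) ≤ c 1 := by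
  have ha_drop (k : ℕ) : m - a k ≤ k * (m - a 1) := by simpa [ha0] using ha.sub_le_nsmul_sub k
  have hb_drop₂ : m - b 2 ≤ 2 * (m - b 1) := by simpa [hb0] using hb.sub_le_nsmul_sub 2
  have hb_drop₃ : m - b 3 ≤ 3 * (m - b 1) := by simpa [hb0] using hb.sub_le_nsmul_sub 3
  have hc_drop : m - c 2 ≤ 2 * (m - c 1) := by simpa [hc0] using hc.sub_le_nsmul_sub 2
  have hsix : 6 * (m - a 1) ≤ m := by linarith
  exact ⟨fun k ↦ by linarith [ha_drop k, hsix], by linarith, by linarith, by linarith⟩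

end Trivalent

theorem trivalent_E8_step_general {m : ℤ} {a b c : ℕ → ℤ}
    (ha : ConvexSeq a) (hb : ConvexSeq b) (hc : ConvexSeq c)
    (ha0 : a 0 = m) (hb0 : b 0 = m) (hc0 : c 0 = m) {n : ℕ} (han : a n < m)
    (hbal : 2 * m ≤ a 1 + b 1 + c 1) (hc2 : c 2 ≤ 0) (hb3 : b 3 ≤ 0) :
    6 ≤ m ∧ (∀ k : ℕ, k ≤ 6 → (6 : ℤ) - (k : ℤ) ≤ a k) ∧ 4 ≤ b 1 ∧ 2 ≤ b 2 ∧ 3 ≤ c 1 := by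
  have hdrop : 1 ≤ m - a 1 := by
    have hlt : a 1 < a 0 := ha.apply_one_lt_apply_zero (han.trans_eq ha0.symm)
    lia
  obtain ⟨hak, hb1, hb2, hc1⟩ := affineE8_mul_sub_le ha hb hc ha0 hb0 hc0 hbal hc2 hb3
  have ha_ge (k : ℕ) (hk : k ≤ 6) : (6 : ℤ) - k ≤ a k :=
    (le_mul_of_one_le_right (by lia) hdrop).trans (hak k)
  exact ⟨by simpa [ha0] using ha_ge 0, ha_ge, by lia, by lia, by lia⟩

/-- E8 step: three nonnegative, convex, eventually-zero leg sequences with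
common value `m ≥ 2` at the trivalent vertex, satisfying the balance condition
`2m ≤ a 1 + b 1 + c 1`, with `c 2 = 0` and `b 3 = 0`, force `m ≥ 6`,
`a k ≥ 6 − k` for `0 ≤ k ≤ 6`, `b 1 ≥ 4`, `b 2 ≥ 2` and `c 1 ≥ 3`. -/
theorem trivalent_E8_step (m : ℤ) (hm : 2 ≤ m) (a b c : ℕ → ℤ)
    (hannonneg : ∀ n : ℕ, 0 ≤ a n)
    (hbnonneg : ∀ n : ℕ, 0 ≤ b n)
    (hcnonneg : ∀ n : ℕ, 0 ≤ c n)
    (haconv : ∀ n : ℕ, 1 ≤ n → 2 * a n ≤ a (n - 1) + a (n + 1))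
    (hbconv : ∀ n : ℕ, 1 ≤ n → 2 * b n ≤ b (n - 1) + b (n + 1))
    (hcconv : ∀ n : ℕ, 1 ≤ n → 2 * c n ≤ c (n - 1) + c (n + 1))
    (hazero : ∃ N : ℕ, ∀ n : ℕ, N ≤ n → a n = 0)
    (hbzero : ∃ N : ℕ, ∀ n : ℕ, N ≤ n → b n = 0)
    (hczero : ∃ N : ℕ, ∀ n : ℕ, N ≤ n → c n = 0)
    (ha0 : a 0 = m) (hb0 : b 0 = m) (hc0 : c 0 = m)
    (hbal : 2 * m ≤ a 1 + b 1 + c 1)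
    (hc2 : c 2 = 0) (hb3 : b 3 = 0) :
    6 ≤ m ∧ (∀ k : ℕ, k ≤ 6 → (6 : ℤ) - (k : ℤ) ≤ a k) ∧
      4 ≤ b 1 ∧ 2 ≤ b 2 ∧ 3 ≤ c 1 := by
  obtain ⟨N, hN⟩ := hazero
  have haN : a N < m := by linarith [hN N le_rfl]
  exact trivalent_E8_step_general (convexSeq_iff_two_mul.2 haconv) (convexSeq_iff_two_mul.2 hbconv)
    (convexSeq_iff_two_mul.2 hcconv) ha0 hb0 hc0 haN hbal hc2.le hb3.le
end

section
/- Let a, b : ℕ → ℤ be two sequences, each nonnegative, convex (2·x(n) ≤ x(n−1) + x(n+1) for all n ≥ 1), and eventually zero, with a(0) ≥ 1 and b(0) ≥ 1, satisfying the balance conditions 2·a(0) ≤ 2·b(0) + a(1) and 2·b(0) ≤ a(0) + b(1). Then either (F4 pattern) a(0) ≥ 3, a(1) ≥ 2, a(2) ≥ 1, b(0) ≥ 2 and b(1) ≥ 1, or (F4-twisted pattern) a(0) ≥ 4, a(1) ≥ 2, b(0) ≥ 3, b(1) ≥ 2 and b(2) ≥ 1. -/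
/-!
A convex sequence that ever falls below its initial value falls at its first step, so both gaps
`δ = a 0 - a 1` and `ε = b 0 - b 1` are positive. Each gap bounds a weight on the other side of
the double edge: the balance conditions combine to `2 * ε ≤ a 1` and `δ ≤ b 1`. This yields the
untwisted pattern except for `1 ≤ a 2`. If `a 2 ≤ 0`, convexity at `a 1` makes `δ` at least half of
`a 0`, so that `b 0 < a 0 ≤ 2 * δ ≤ 2 * b 1 ≤ b 0 + b 2`, which forces `b 2` to be positive.
-/

theorem monotone_of_convex_of_apply_zero_le {α : Type*} [AddCommMonoid α] [PartialOrder α]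
    [IsOrderedCancelAddMonoid α] {x : ℕ → α}
    (hconv : ∀ n, 2 • x (n + 1) ≤ x n + x (n + 2)) (h : x 0 ≤ x 1) : Monotone x := by
  refine monotone_nat_of_le_succ fun n ↦ ?_
  induction n with
  | zero => exact h
  | succ n ih =>
    have hstep : x (n + 1) + x (n + 1) ≤ x (n + 1) + x (n + 2) :=
      calc x (n + 1) + x (n + 1) = 2 • x (n + 1) := (two_nsmul _).symm
        _ ≤ x n + x (n + 2) := hconv n
        _ ≤ x (n + 1) + x (n + 2) := by gcongr
    exact le_of_add_le_add_left hstep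

theorem apply_one_lt_of_convex_of_apply_lt {α : Type*} [AddCommMonoid α] [LinearOrder α]
    [IsOrderedCancelAddMonoid α] {x : ℕ → α} {N : ℕ}
    (hconv : ∀ n, 2 • x (n + 1) ≤ x n + x (n + 2)) (hN : x N < x 0) : x 1 < x 0 := by
  contrapose! hN
  exact monotone_of_convex_of_apply_zero_le hconv hN N.zero_le

theorem double_laced_F4_pattern_general (a b : ℕ → ℤ)
    (haconv : 2 * a 1 ≤ a 0 + a 2) (hbconv : 2 * b 1 ≤ b 0 + b 2)
    (ha : a 1 < a 0) (hb : b 1 < b 0)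
    (hbal1 : 2 * a 0 ≤ 2 * b 0 + a 1) (hbal2 : 2 * b 0 ≤ a 0 + b 1) :
    (3 ≤ a 0 ∧ 2 ≤ a 1 ∧ 1 ≤ a 2 ∧ 2 ≤ b 0 ∧ 1 ≤ b 1) ∨
    (4 ≤ a 0 ∧ 2 ≤ a 1 ∧ 3 ≤ b 0 ∧ 2 ≤ b 1 ∧ 1 ≤ b 2) := by
  have hgap_b : 2 * (b 0 - b 1) ≤ a 1 := by linarith
  have hgap_a : a 0 - a 1 ≤ b 1 := by linarith
  have ha1 : 2 ≤ a 1 :=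
    calc 2 ≤ 2 * (b 0 - b 1) := by linarith
      _ ≤ a 1 := hgap_b
  rcases le_or_gt 1 (a 2) with ha2 | ha2
  · have hb1 : 1 ≤ b 1 := (sub_pos.2 ha).trans_le hgap_a
    exact .inl ⟨by linarith, ha1, ha2, by linarith, hb1⟩
  · have hhalf : a 1 ≤ a 0 - a 1 := by linarith
    have hb1 : 2 ≤ b 1 := ha1.trans (hhalf.trans hgap_a)
    have hb2 : b 0 < b 0 + b 2 :=
      calc b 0 < a 0 := by linarith
        _ ≤ 2 * (a 0 - a 1) := by linarith only [hhalf]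
        _ ≤ 2 * b 1 := by gcongr
        _ ≤ b 0 + b 2 := hbconv
    exact .inr ⟨by linarith, ha1, by linarith, hb1, pos_of_lt_add_right hb2⟩

/-- A linear quiver with exactly one double-laced edge always contains either
the untwisted affine `F4^(1)` Dynkin weight pattern or the twisted affine
`F4^(2)` (`E6^(2)`) Dynkin weight pattern: given nonnegative, convex,
eventually-zero sequences `a`, `b` with `a 0 ≥ 1`, `b 0 ≥ 1` satisfying the
balance conditions `2·a 0 ≤ 2·b 0 + a 1` and `2·b 0 ≤ a 0 + b 1`, either
`a 0 ≥ 3`, `a 1 ≥ 2`, `a 2 ≥ 1`, `b 0 ≥ 2`, `b 1 ≥ 1`, or `a 0 ≥ 4`,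
`a 1 ≥ 2`, `b 0 ≥ 3`, `b 1 ≥ 2`, `b 2 ≥ 1`. -/
theorem double_laced_F4_pattern (a b : ℕ → ℤ)
    (hannonneg : ∀ n : ℕ, 0 ≤ a n)
    (hbnonneg : ∀ n : ℕ, 0 ≤ b n)
    (haconv : ∀ n : ℕ, 1 ≤ n → 2 * a n ≤ a (n - 1) + a (n + 1))
    (hbconv : ∀ n : ℕ, 1 ≤ n → 2 * b n ≤ b (n - 1) + b (n + 1))
    (hazero : ∃ N : ℕ, ∀ n : ℕ, N ≤ n → a n = 0)
    (hbzero : ∃ N : ℕ, ∀ n : ℕ, N ≤ n → b n = 0)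
    (ha0 : 1 ≤ a 0) (hb0 : 1 ≤ b 0)
    (hbal1 : 2 * a 0 ≤ 2 * b 0 + a 1) (hbal2 : 2 * b 0 ≤ a 0 + b 1) :
    (3 ≤ a 0 ∧ 2 ≤ a 1 ∧ 1 ≤ a 2 ∧ 2 ≤ b 0 ∧ 1 ≤ b 1) ∨
    (4 ≤ a 0 ∧ 2 ≤ a 1 ∧ 3 ≤ b 0 ∧ 2 ≤ b 1 ∧ 1 ≤ b 2) := by
  obtain ⟨M, hM⟩ := hazero
  obtain ⟨N, hN⟩ := hbzero
  have ha : a 1 < a 0 := apply_one_lt_of_convex_of_apply_lt (N := M)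
    (fun n ↦ by simpa using haconv (n + 1) n.succ_pos) (by rwa [hM M le_rfl])
  have hb : b 1 < b 0 := apply_one_lt_of_convex_of_apply_lt (N := N)
    (fun n ↦ by simpa using hbconv (n + 1) n.succ_pos) (by rwa [hN N le_rfl])
  exact double_laced_F4_pattern_general a b (haconv 1 le_rfl) (hbconv 1 le_rfl) ha hb hbal1 hbal2
end

section
/- Let G be a finite simple graph on a nonempty vertex set which is connected and acyclic (a tree), and let K assign to each vertex a positive integer, such that the balance condition 2·K(x) ≤ Σ_{y adjacent to x} K(y) holds at every vertex x. Then G has a vertex of degree at least 3. -/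
/-!
Let `x` be a vertex where the weight attains its positive maximum `M`. The balance condition
`d * M ≤ ∑ K y`, together with `K y ≤ M` for the neighbors `y` of `x`, forces `d ≤ deg x`, and
forces `K y = M` for every neighbor if equality holds. So if no vertex of weight `M` had degree
above `d`, the weight would be constant on the component of `x`, and all degrees there would be at
least `d`. This is impossible for `2 ≤ d`, since a finite component of an acyclic graph has a leaf
or is a single vertex.
-/

section Forest

variable {V : Type*} {G : SimpleGraph V}

theorem exists_degree_le_one_of_isTree [Fintype V] [DecidableRel G.Adj] (hG : G.IsTree) :
    ∃ x, G.degree x ≤ 1 := by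
  have := hG.connected.nonempty
  rcases subsingleton_or_nontrivial V with _ | _
  · exact ⟨Classical.arbitrary V, by simp⟩
  · exact hG.exists_vert_degree_one_of_nontrivial.imp fun _ hx ↦ hx.le

theorem degree_toSimpleGraph (c : G.ConnectedComponent) (x : c) [Fintype (G.neighborSet x)]
    [Fintype (c.toSimpleGraph.neighborSet x)] : c.toSimpleGraph.degree x = G.degree x := by
  have hmap : (c.toSimpleGraph.neighborFinset x).map (.subtype (· ∈ c)) =
      G.neighborFinset x := by
    ext y
    have hmem (hxy : G.Adj x y) : y ∈ c := c.mem_supp_of_adj_mem_supp x.2 hxy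
    simpa [c.toSimpleGraph_adj x.2] using hmem
  rw [← SimpleGraph.card_neighborFinset_eq_degree, ← SimpleGraph.card_neighborFinset_eq_degree,
    ← hmap, Finset.card_map]

theorem exists_mem_supp_degree_le_one_of_isAcyclic [G.LocallyFinite] (hG : G.IsAcyclic)
    (c : G.ConnectedComponent) (hc : c.supp.Finite) : ∃ x ∈ c.supp, G.degree x ≤ 1 := by
  classical
  have := hc.fintype
  obtain ⟨x, hx⟩ := exists_degree_le_one_of_isTree (hG.isTree_connectedComponent c)
  exact ⟨x, x.2, (degree_toSimpleGraph c x).symm.trans_le hx⟩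

end Forest

section MaximumPrinciple

variable {V R : Type*} {G : SimpleGraph V} [AddCommMonoid R] [PartialOrder R]
  [IsOrderedCancelAddMonoid R] {K : V → R} {d : ℕ} {x y : V}

theorem le_degree_of_nsmul_le_sum_neighborFinset [Fintype (G.neighborSet x)]
    (hpos : 0 < K x) (hmax : ∀ y, G.Adj x y → K y ≤ K x)
    (hbal : d • K x ≤ ∑ y ∈ G.neighborFinset x, K y) : d ≤ G.degree x := by
  have hsum : ∑ y ∈ G.neighborFinset x, K y ≤ G.degree x • K x :=
    Finset.sum_le_card_nsmul _ _ _ (by simpa using hmax)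
  by_contra! hlt
  exact (hbal.trans hsum).not_gt (nsmul_lt_nsmul_left hpos hlt)

theorem eq_of_adj_of_nsmul_le_sum_neighborFinset [Fintype (G.neighborSet x)]
    (hnonneg : 0 ≤ K x) (hmax : ∀ y, G.Adj x y → K y ≤ K x) (hdeg : G.degree x ≤ d)
    (hbal : d • K x ≤ ∑ y ∈ G.neighborFinset x, K y) (hxy : G.Adj x y) : K y = K x := by
  have hle : ∀ y ∈ G.neighborFinset x, K y ≤ K x := by simpa using hmax
  have hsum : ∑ y ∈ G.neighborFinset x, K y = ∑ _y ∈ G.neighborFinset x, K x := by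
    refine (Finset.sum_le_sum hle).antisymm ?_
    calc ∑ _y ∈ G.neighborFinset x, K x = G.degree x • K x := Finset.sum_const _
      _ ≤ d • K x := nsmul_le_nsmul_left hnonneg hdeg
      _ ≤ ∑ y ∈ G.neighborFinset x, K y := hbal
  exact (Finset.sum_eq_sum_iff_of_le hle).mp hsum y (by simpa using hxy)

theorem eq_of_reachable_of_nsmul_le_sum_neighborFinset [G.LocallyFinite]
    (hnonneg : 0 ≤ K x) (hmax : ∀ y, K y ≤ K x) (hdeg : ∀ y, K y = K x → G.degree y ≤ d)
    (hbal : ∀ y, d • K y ≤ ∑ z ∈ G.neighborFinset y, K z) (hxy : G.Reachable x y) :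
    K y = K x := by
  rw [SimpleGraph.reachable_iff_reflTransGen] at hxy
  induction hxy with
  | refl => rfl
  | @tail y z _ hyz ih =>
    rw [← ih] at hnonneg hmax
    exact (eq_of_adj_of_nsmul_le_sum_neighborFinset hnonneg (fun z _ ↦ hmax z) (hdeg y ih)
      (hbal y) hyz).trans ih

end MaximumPrinciple

theorem exists_lt_and_forall_le_of_finite_setOf_lt {α β : Type*} [LinearOrder β] {f : α → β}
    {b : β} (hfin : {a | b < f a}.Finite) (hlt : ∃ a, b < f a) :
    ∃ a, b < f a ∧ ∀ a', f a' ≤ f a := by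
  obtain ⟨a, ha, hmax⟩ := Set.exists_max_image _ f hfin hlt
  exact ⟨a, ha, fun a' ↦ (le_or_gt (f a') b).elim (fun h ↦ h.trans (le_of_lt ha)) (hmax a')⟩

theorem balanced_tree_has_trivalent_vertex_general {V R : Type*} [AddCommMonoid R]
    [LinearOrder R] [IsOrderedCancelAddMonoid R] {G : SimpleGraph V} [G.LocallyFinite]
    (hacyc : G.IsAcyclic) {d : ℕ} (hd : 2 ≤ d) {K : V → R} (hfin : {x | 0 < K x}.Finite)
    (hpos : ∃ x, 0 < K x) (hbal : ∀ x, d • K x ≤ ∑ y ∈ G.neighborFinset x, K y) :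
    ∃ x, d < G.degree x ∧ ∀ y, K y ≤ K x := by
  obtain ⟨x, hx, hmax⟩ := exists_lt_and_forall_le_of_finite_setOf_lt hfin hpos
  by_contra! hno
  have hdeg (y : V) (hy : K y = K x) : G.degree y ≤ d := by
    by_contra! hlt
    obtain ⟨z, hz⟩ := hno y hlt
    exact (hmax z).not_gt (hy ▸ hz)
  let c := G.connectedComponentMk x
  have hconst (y : V) (hy : y ∈ c.supp) : K y = K x :=
    eq_of_reachable_of_nsmul_le_sum_neighborFinset hx.le hmax hdeg hbal
      (SimpleGraph.ConnectedComponent.exact hy).symm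
  have hKpos (y : V) (hy : y ∈ c.supp) : 0 < K y := hx.trans_eq (hconst y hy).symm
  obtain ⟨y, hy, hleaf⟩ := exists_mem_supp_degree_le_one_of_isAcyclic hacyc c (hfin.subset hKpos)
  have hd_le : d ≤ G.degree y :=
    le_degree_of_nsmul_le_sum_neighborFinset (hKpos y hy)
      (fun z _ ↦ (hmax z).trans_eq (hconst y hy).symm) (hbal y)
  omega

/-- A finite tree carrying positive integer weights satisfying the balance
condition `2·K(x) ≤ Σ_{y ~ x} K(y)` at every vertex has a vertex of degree at
least `3`. -/
theorem balanced_tree_has_trivalent_vertex {V : Type*} [Fintype V] [Nonempty V]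
    [DecidableEq V] (G : SimpleGraph V) [DecidableRel G.Adj]
    (hconn : G.Connected) (hacyc : G.IsAcyclic)
    (K : V → ℤ) (hpos : ∀ x : V, 0 < K x)
    (hbal : ∀ x : V, 2 * K x ≤ ∑ y ∈ G.neighborFinset x, K y) :
    ∃ x : V, 3 ≤ G.degree x :=
  (balanced_tree_has_trivalent_vertex_general hacyc le_rfl (Set.toFinite _)
    ⟨Classical.arbitrary V, hpos _⟩
    (by simpa only [nsmul_eq_mul, Nat.cast_ofNat] using hbal)).imp fun _ ↦ And.left
end
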